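/- arXiv:1808.09356 — 2 statements merged into one kernel-verified Lean document; each statement's English description precedes it below -/
import Mathlib

section
/- (Carleman similarity principle, smooth version.) Let ε > 0, let B_ε ⊂ ℂ be the open ball of radius ε centred at 0, let C₁, C₂ : B_ε → ℂ be continuous and bounded, and let v : B_ε → ℂ be continuously differentiable (over ℝ) with ∂̄v(z) + C₁(z)·v(z) + C₂(z)·conj(v(z)) = 0 for all z ∈ B_ε. Then there exist δ ∈ (0, ε], a continuous function Φ : B_δ → ℂ with Φ(z) ≠ 0 for all z ∈ B_δ, and a holomorphic function σ : B_δ → ℂ, such that v(z) = Φ(z)·σ(z) for all z ∈ B_δ. -/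
open Complex Metric

/-- The Cauchy–Riemann operator `∂̄v(z) = (1/2)(∂v/∂x + i ∂v/∂y)`. -/
noncomputable def dbar (v : ℂ → ℂ) (z : ℂ) : ℂ :=
  (1 / 2) * (fderiv ℝ v z 1 + Complex.I * fderiv ℝ v z Complex.I)

/-!
Since `|∂̄v| ≤ M |v|`, the function `A = ∂̄v / v`, extended by `0`, is bounded. Its Cauchy
transform `φ = A ⋆ 1 / (π z)` should satisfy `∂̄φ = A`, which would give
`∂̄(v e^{-φ}) = (∂̄v - v A) e^{-φ} = 0` and the factorisation `v = e^φ · (v e^{-φ})`. However, `A`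
need not be continuous at the zeros of `v`, nor `φ` differentiable. The Cauchy kernel is therefore
replaced by the smooth kernels `c k(c z)`, where `k(z) = conj z / (π (1 + |z|²))`: their distance
to `1 / (π z)` in `L¹` is `O(1 / c)`, and since `∂̄k` is the Fubini–Study density, their
`∂̄`-derivatives form an approximate identity. The transforms `φ_c` converge uniformly to `φ`,
while `∂̄φ_c` stays bounded by `sup |A|` and converges to `A` wherever `v ≠ 0`; at the zeros of `v`
the limit of `v · ∂̄φ_c` vanishes all the same. Hence `∂̄(v e^{-φ_c}) → 0` pointwise and boundedly,
so by Green's formula the integrals of `v e^{-φ}` over the boundaries of rectangles vanish, and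
Morera's theorem applies.
-/

open MeasureTheory Filter Topology Set
open scoped Convolution Real Interval ComplexConjugate

section DbarCalculus

variable {U : Set ℂ} {f w : ℂ → ℂ} {z : ℂ}

theorem dbar_eq_of_hasFDerivAt {f' : ℂ →L[ℝ] ℂ} (hf : HasFDerivAt f f' z) :
    dbar f z = 1 / 2 * (f' 1 + I * f' I) := by
  rw [dbar, hf.fderiv]

theorem dbar_mul_cexp_neg (hf : DifferentiableAt ℝ f z) (hw : DifferentiableAt ℝ w z) :
    dbar (fun ζ ↦ f ζ * exp (-w ζ)) z = (dbar f z - f z * dbar w z) * exp (-w z) := by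
  rw [dbar_eq_of_hasFDerivAt (hf.hasFDerivAt.fun_mul hw.hasFDerivAt.fun_neg.cexp), dbar, dbar]
  simp only [add_apply, smul_apply, neg_apply, smul_eq_mul]
  ring

theorem norm_dbar_le_norm_fderiv (f : ℂ → ℂ) (z : ℂ) : ‖dbar f z‖ ≤ ‖fderiv ℝ f z‖ := by
  have hone : ‖fderiv ℝ f z 1‖ ≤ ‖fderiv ℝ f z‖ :=
    (fderiv ℝ f z).unit_le_opNorm 1 norm_one.le
  have hI : ‖I * fderiv ℝ f z I‖ ≤ ‖fderiv ℝ f z‖ := by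
    rw [norm_mul, norm_I, one_mul]
    exact (fderiv ℝ f z).unit_le_opNorm I norm_I.le
  rw [dbar, norm_mul, norm_div, norm_one, Complex.norm_two]
  linarith [norm_add_le_of_le hone hI]

theorem dbar_smul_comp_smul (hf : Differentiable ℝ f) (c : ℝ) (z : ℂ) :
    dbar (fun ζ ↦ c • f (c • ζ)) z = (c ^ 2 : ℝ) * dbar f (c • z) := by
  have hd : DifferentiableAt ℝ (fun ζ ↦ f (c • ζ)) z := by fun_prop
  rw [dbar, dbar, fderiv_fun_const_smul hd, fderiv_comp_smul, smul_smul, ← sq]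
  simp only [smul_apply, real_smul]
  ring

theorem continuousOn_dbar (hU : IsOpen U) (hf : ContDiffOn ℝ 1 f U) : ContinuousOn (dbar f) U := by
  have hf' : ContinuousOn (fderiv ℝ f) U := hf.continuousOn_fderiv_of_isOpen hU le_rfl
  unfold dbar
  fun_prop

theorem wedgeIntegral_add_wedgeIntegral_eq_integral_dbar {p q : ℂ}
    (hpq : Rectangle p q ⊆ U) (hf : DifferentiableOn ℝ f U) (hdf : ContinuousOn (dbar f) U) :
    wedgeIntegral p q f + wedgeIntegral q p f =
      ∫ x in p.re..q.re, ∫ y in p.im..q.im, 2 * I * dbar f (x + y * I) := by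
  have curl_eq (u : ℂ) : I • fderiv ℝ f u 1 - fderiv ℝ f u I = 2 * I * dbar f u := by
    rw [dbar, smul_eq_mul]
    linear_combination (-fderiv ℝ f u I) * I_mul_I
  rw [wedgeIntegral_add_wedgeIntegral_eq,
    integral_boundary_rect_of_differentiableOn_real f p q (hf.mono hpq)]
  · simp only [curl_eq]
  · simp only [curl_eq]
    exact ((hdf.mono hpq).const_mul _).integrableOn_compact
      (isCompact_uIcc.reProdIm isCompact_uIcc)

end DbarCalculus

theorem intervalIntegral_intervalIntegral_eq_setIntegral {E : Type*} [NormedAddCommGroup E]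
    [NormedSpace ℝ E] {a b c d : ℝ} {g : ℝ × ℝ → E}
    (hg : ContinuousOn g ([[a, b]] ×ˢ [[c, d]])) :
    ∫ x in a..b, ∫ y in c..d, g (x, y) =
      ((if a ≤ b then 1 else -1 : ℝ) * (if c ≤ d then 1 else -1 : ℝ)) •
        ∫ p in Ι a b ×ˢ Ι c d, g p := by
  have hint : IntegrableOn g (Ι a b ×ˢ Ι c d) (volume.prod volume) :=
    (hg.integrableOn_compact (isCompact_uIcc.prod isCompact_uIcc)).mono_set
      (prod_mono uIoc_subset_uIcc uIoc_subset_uIcc)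
  simp only [intervalIntegral.intervalIntegral_eq_integral_uIoc]
  rw [integral_smul, smul_smul, Measure.volume_eq_prod, setIntegral_prod g hint]

/-- Pointwise convergence on `U` together with eventual uniform bounds on the compact subsets
of `U`: the mode of convergence that passes through integrals over compact sets. -/
structure TendstoBoundedlyOn {ι X E : Type*} [TopologicalSpace X] [NormedAddCommGroup E]
    (F : ι → X → E) (f : X → E) (l : Filter ι) (U : Set X) : Prop where
  tendsto : ∀ x ∈ U, Tendsto (fun n ↦ F n x) l (𝓝 (f x))
  eventually_bounded : ∀ K ⊆ U, IsCompact K → ∃ B, ∀ᶠ n in l, ∀ x ∈ K, ‖F n x‖ ≤ B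

namespace TendstoBoundedlyOn

variable {ι X E : Type*} [TopologicalSpace X] [NormedAddCommGroup E] {l : Filter ι} {U : Set X}

section Algebra

variable {F : ι → X → E} {f : X → E}

theorem const (l : Filter ι) (hf : ContinuousOn f U) :
    TendstoBoundedlyOn (fun _ ↦ f) f l U where
  tendsto _ _ := tendsto_const_nhds
  eventually_bounded _ hKU hK :=
    let ⟨B, hB⟩ := hK.exists_bound_of_continuousOn (hf.mono hKU)
    ⟨B, .of_forall fun _ ↦ hB⟩

theorem of_tendstoUniformlyOn (h : TendstoUniformlyOn F f l U) (hf : ContinuousOn f U) :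
    TendstoBoundedlyOn F f l U where
  tendsto _ hx := h.tendsto_at hx
  eventually_bounded K hKU hK := by
    obtain ⟨B, hB⟩ := hK.exists_bound_of_continuousOn (hf.mono hKU)
    refine ⟨B + 1, ?_⟩
    filter_upwards [Metric.tendstoUniformlyOn_iff.1 h 1 one_pos] with n hn x hx
    calc ‖F n x‖ ≤ ‖f x‖ + dist (f x) (F n x) := by
          rw [dist_eq_norm]; exact norm_le_norm_add_norm_sub _ _
      _ ≤ B + 1 := add_le_add (hB x hx) (hn x (hKU hx)).le

theorem congr {F' : ι → X → E} {f' : X → E} (h : TendstoBoundedlyOn F f l U)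
    (hF : ∀ n, EqOn (F n) (F' n) U) (hf : EqOn f f' U) : TendstoBoundedlyOn F' f' l U where
  tendsto x hx := by simpa only [← hF _ hx, ← hf hx] using h.tendsto x hx
  eventually_bounded K hKU hK := by
    obtain ⟨B, hB⟩ := h.eventually_bounded K hKU hK
    refine ⟨B, ?_⟩
    filter_upwards [hB] with n hBn x hx
    simpa only [← hF n (hKU hx)] using hBn x hx

theorem sub {G : ι → X → E} {g : X → E} (hF : TendstoBoundedlyOn F f l U)
    (hG : TendstoBoundedlyOn G g l U) :
    TendstoBoundedlyOn (fun n x ↦ F n x - G n x) (fun x ↦ f x - g x) l U where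
  tendsto x hx := (hF.tendsto x hx).sub (hG.tendsto x hx)
  eventually_bounded K hKU hK := by
    obtain ⟨B, hB⟩ := hF.eventually_bounded K hKU hK
    obtain ⟨C, hC⟩ := hG.eventually_bounded K hKU hK
    refine ⟨B + C, ?_⟩
    filter_upwards [hB, hC] with n hBn hCn x hx
    exact norm_sub_le_of_le (hBn x hx) (hCn x hx)

theorem mul {R : Type*} [NormedRing R] {F G : ι → X → R} {f g : X → R}
    (hF : TendstoBoundedlyOn F f l U) (hG : TendstoBoundedlyOn G g l U) :
    TendstoBoundedlyOn (fun n x ↦ F n x * G n x) (fun x ↦ f x * g x) l U where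
  tendsto x hx := (hF.tendsto x hx).mul (hG.tendsto x hx)
  eventually_bounded K hKU hK := by
    obtain ⟨B, hB⟩ := hF.eventually_bounded K hKU hK
    obtain ⟨C, hC⟩ := hG.eventually_bounded K hKU hK
    refine ⟨B * C, ?_⟩
    filter_upwards [hB, hC] with n hBn hCn x hx
    exact norm_mul_le_of_le (hBn x hx) (hCn x hx)

theorem complexExp {W : ι → X → ℂ} {w : X → ℂ} (hW : TendstoBoundedlyOn W w l U) :
    TendstoBoundedlyOn (fun n x ↦ exp (W n x)) (fun x ↦ exp (w x)) l U where
  tendsto x hx := (hW.tendsto x hx).cexp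
  eventually_bounded K hKU hK := by
    obtain ⟨B, hB⟩ := hW.eventually_bounded K hKU hK
    refine ⟨Real.exp B, ?_⟩
    filter_upwards [hB] with n hBn x hx
    exact (norm_exp_le_exp_norm _).trans (Real.exp_le_exp.2 (hBn x hx))

end Algebra

section Integral

variable [NormedSpace ℝ E] [l.IsCountablyGenerated] {F : ι → X → E} {f : X → E} {a b c d : ℝ}

theorem tendsto_setIntegral_comp {Y : Type*} [TopologicalSpace Y] [SecondCountableTopology Y]
    [MeasurableSpace Y] [OpensMeasurableSpace Y] {μ : Measure Y} [IsFiniteMeasureOnCompacts μ]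
    {γ : Y → X} {S T : Set Y} (h : TendstoBoundedlyOn F f l U) (hF : ∀ n, ContinuousOn (F n) U)
    (hS : MeasurableSet S) (hT : IsCompact T) (hST : S ⊆ T) (hγ : ContinuousOn γ T)
    (hγU : MapsTo γ T U) :
    Tendsto (fun n ↦ ∫ y in S, F n (γ y) ∂μ) l (𝓝 (∫ y in S, f (γ y) ∂μ)) := by
  obtain ⟨B, hB⟩ := h.eventually_bounded (γ '' T) hγU.image_subset (hT.image_of_continuousOn hγ)
  have hμS : μ S ≠ ⊤ := ((measure_mono hST).trans_lt hT.measure_lt_top).ne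
  refine tendsto_integral_filter_of_dominated_convergence (fun _ ↦ B) (.of_forall fun n ↦ ?_) ?_
    (integrableOn_const hμS) ?_
  · exact (((hF n).comp hγ hγU).mono hST).aestronglyMeasurable hS
  · filter_upwards [hB] with n hBn
    exact ae_restrict_of_forall_mem hS fun y hy ↦ hBn _ (mem_image_of_mem γ (hST hy))
  · exact ae_restrict_of_forall_mem hS fun y hy ↦ h.tendsto _ (hγU (hST hy))

theorem tendsto_intervalIntegral_comp {γ : ℝ → X} (h : TendstoBoundedlyOn F f l U)
    (hF : ∀ n, ContinuousOn (F n) U) (hγ : ContinuousOn γ [[a, b]]) (hγU : MapsTo γ [[a, b]] U) :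
    Tendsto (fun n ↦ ∫ t in a..b, F n (γ t)) l (𝓝 (∫ t in a..b, f (γ t))) := by
  simp only [intervalIntegral.intervalIntegral_eq_integral_uIoc]
  exact (h.tendsto_setIntegral_comp hF measurableSet_uIoc isCompact_uIcc uIoc_subset_uIcc
    hγ hγU).const_smul _

theorem tendsto_intervalIntegral_intervalIntegral_comp {γ : ℝ × ℝ → X}
    (h : TendstoBoundedlyOn F f l U) (hF : ∀ n, ContinuousOn (F n) U) (hf : ContinuousOn f U)
    (hγ : ContinuousOn γ ([[a, b]] ×ˢ [[c, d]])) (hγU : MapsTo γ ([[a, b]] ×ˢ [[c, d]]) U) :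
    Tendsto (fun n ↦ ∫ x in a..b, ∫ y in c..d, F n (γ (x, y))) l
      (𝓝 (∫ x in a..b, ∫ y in c..d, f (γ (x, y)))) := by
  have hiter {g : X → E} (hg : ContinuousOn g U) :=
    intervalIntegral_intervalIntegral_eq_setIntegral (hg.comp hγ hγU)
  simp only [Function.comp_apply] at hiter
  simp only [hiter hf, fun n ↦ hiter (hF n)]
  exact (h.tendsto_setIntegral_comp hF (measurableSet_uIoc.prod measurableSet_uIoc)
    (isCompact_uIcc.prod isCompact_uIcc) (prod_mono uIoc_subset_uIcc uIoc_subset_uIcc)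
    hγ hγU).const_smul _

end Integral

section Holomorphic

variable {U : Set ℂ} {F : ι → ℂ → ℂ} {f : ℂ → ℂ} [l.IsCountablyGenerated] {p q : ℂ}

theorem tendsto_wedgeIntegral (h : TendstoBoundedlyOn F f l U) (hF : ∀ n, ContinuousOn (F n) U)
    (hpq : Rectangle p q ⊆ U) :
    Tendsto (fun n ↦ wedgeIntegral p q (F n)) l (𝓝 (wedgeIntegral p q f)) := by
  have hmem {x y : ℝ} (hx : x ∈ [[p.re, q.re]]) (hy : y ∈ [[p.im, q.im]]) : (x + y * I : ℂ) ∈ U :=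
    hpq (by simpa [Rectangle, mem_reProdIm] using And.intro hx hy)
  unfold wedgeIntegral
  refine (h.tendsto_intervalIntegral_comp (γ := fun x : ℝ ↦ (x + p.im * I : ℂ)) hF (by fun_prop)
    fun x hx ↦ hmem hx left_mem_uIcc).add (Tendsto.const_smul ?_ I)
  exact h.tendsto_intervalIntegral_comp (γ := fun y : ℝ ↦ (q.re + y * I : ℂ)) hF (by fun_prop)
    fun y hy ↦ hmem right_mem_uIcc hy

theorem differentiableOn_of_dbar [l.NeBot] (hU : IsOpen U) (hf : ContinuousOn f U)
    (hF : ∀ n, DifferentiableOn ℝ (F n) U) (hF' : ∀ n, ContinuousOn (dbar (F n)) U)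
    (h : TendstoBoundedlyOn F f l U) (h' : TendstoBoundedlyOn (fun n ↦ dbar (F n)) 0 l U) :
    DifferentiableOn ℂ f U := by
  refine (isConservativeOn_and_continuousOn_iff_isDifferentiableOn hU).1 ⟨fun p q hpq ↦ ?_, hf⟩
  rw [← add_eq_zero_iff_eq_neg]
  have hqp : Rectangle q p ⊆ U := by rwa [Rectangle, uIcc_comm, uIcc_comm q.im]
  have hFc (n : ι) : ContinuousOn (F n) U := (hF n).continuousOn
  have hγU : MapsTo (fun t : ℝ × ℝ ↦ (t.1 + t.2 * I : ℂ))
      ([[p.re, q.re]] ×ˢ [[p.im, q.im]]) U := fun t ht ↦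
    hpq (mem_reProdIm.2 (by simpa using mem_prod.1 ht))
  have hboundary := (h.tendsto_wedgeIntegral hFc hpq).add (h.tendsto_wedgeIntegral hFc hqp)
  have hinterior :=
    ((const l continuousOn_const).mul h').tendsto_intervalIntegral_intervalIntegral_comp
      (f := fun _ ↦ 2 * I * 0) (fun n ↦ continuousOn_const.mul (hF' n)) continuousOn_const
      (by fun_prop) hγU
  refine tendsto_nhds_unique hboundary ?_
  simpa [wedgeIntegral_add_wedgeIntegral_eq_integral_dbar hpq (hF _) (hF' _)] using hinterior

end Holomorphic

end TendstoBoundedlyOn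

section Convolution

open ContinuousLinearMap

section BoundedFactor

variable {𝕜 G E E' F : Type*} [NormedAddCommGroup E] [NormedAddCommGroup E']
  [NormedAddCommGroup F] [NontriviallyNormedField 𝕜] [NormedSpace 𝕜 E] [NormedSpace 𝕜 E']
  [NormedSpace 𝕜 F] [MeasurableSpace G] [AddCommGroup G] {μ : Measure G} (L : E →L[𝕜] E' →L[𝕜] F)
  {f : G → E} {g : G → E'}

theorem convolutionExistsAt_of_integrable_of_bounded [MeasurableAdd₂ G] [MeasurableNeg G]
    [SFinite μ] [μ.IsAddLeftInvariant] [μ.IsNegInvariant] {M : ℝ}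
    (hf : AEStronglyMeasurable f μ) (hfM : ∀ x, ‖f x‖ ≤ M) (hg : Integrable g μ) (x : G) :
    ConvolutionExistsAt f g x L μ :=
  ((hg.comp_sub_left x).norm.const_mul (‖L‖ * M)).mono'
    (hf.convolution_integrand_snd L hg.aestronglyMeasurable x)
    (.of_forall fun t ↦ L.le_of_opNorm₂_le_of_le le_rfl (hfM t) le_rfl)

theorem convolutionExistsAt_of_bounded_of_integrable [MeasurableAdd₂ G] [MeasurableNeg G]
    [SFinite μ] [μ.IsAddLeftInvariant] (hf : Integrable f μ) (hg : AEStronglyMeasurable g μ)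
    (hgb : BddAbove (range fun x ↦ ‖g x‖)) (x : G) :
    ConvolutionExistsAt f g x L μ :=
  BddAbove.convolutionExistsAt L (hgb.mono (image_subset_range _ _)) MeasurableSet.univ
    (subset_univ _) hf.integrableOn hg

variable [NormedSpace ℝ F]

theorem norm_convolution_le_of_bounded [MeasurableAdd G] [MeasurableNeg G]
    [μ.IsAddLeftInvariant] [μ.IsNegInvariant] {M : ℝ} (hf : ∀ x, ‖f x‖ ≤ M)
    (hg : Integrable g μ) (x : G) :
    ‖(f ⋆[L, μ] g) x‖ ≤ ‖L‖ * M * ∫ y, ‖g y‖ ∂μ := by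
  rw [convolution_def]
  calc ‖∫ t, L (f t) (g (x - t)) ∂μ‖ ≤ ∫ t, ‖L‖ * M * ‖g (x - t)‖ ∂μ :=
        norm_integral_le_of_norm_le ((hg.comp_sub_left x).norm.const_mul _)
          (.of_forall fun t ↦ L.le_of_opNorm₂_le_of_le le_rfl (hf t) le_rfl)
    _ = ‖L‖ * M * ∫ y, ‖g y‖ ∂μ := by
        rw [integral_const_mul, integral_sub_left_eq_self (fun y ↦ ‖g y‖)]

end BoundedFactor

section FDeriv

variable {𝕜 G E E' F : Type*} [NormedAddCommGroup E] [NormedAddCommGroup E']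
  [NormedAddCommGroup F] [RCLike 𝕜] [NormedSpace 𝕜 E] [NormedSpace 𝕜 E'] [NormedSpace ℝ F]
  [NormedSpace 𝕜 F] [NormedAddCommGroup G] [NormedSpace 𝕜 G] [MeasurableSpace G] [BorelSpace G]
  [SecondCountableTopology G] {μ : Measure G} (L : E →L[𝕜] E' →L[𝕜] F) {f : G → E} {g : G → E'}

set_option maxSynthPendingDepth 3 in
theorem hasFDerivAt_convolution_right_of_bddAbove [SFinite μ] [μ.IsAddLeftInvariant]
    (hf : Integrable f μ) (hg : ContDiff 𝕜 1 g) (hgb : BddAbove (range fun x ↦ ‖g x‖))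
    (hgb' : BddAbove (range fun x ↦ ‖fderiv 𝕜 g x‖)) (x : G) :
    HasFDerivAt (f ⋆[L, μ] g) ((f ⋆[L.precompR G, μ] fderiv 𝕜 g) x) x := by
  obtain ⟨B, hB⟩ := hgb'
  have hgm : AEStronglyMeasurable g μ := hg.continuous.aestronglyMeasurable
  refine hasFDerivAt_integral_of_dominated_of_fderiv_le (s := univ)
    (F' := fun y t ↦ L.precompR G (f t) (fderiv 𝕜 g (y - t)))
    (bound := fun t ↦ ‖L.precompR G‖ * ‖f t‖ * B) univ_mem
    (.of_forall (hf.aestronglyMeasurable.convolution_integrand_snd L hgm))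
    (convolutionExistsAt_of_bounded_of_integrable L hf hgm hgb x)
    (hf.aestronglyMeasurable.convolution_integrand_snd _
      (hg.continuous_fderiv one_ne_zero).aestronglyMeasurable x)
    (.of_forall fun t y _ ↦ ?_) ((hf.norm.const_mul _).mul_const _) (.of_forall fun t y _ ↦ ?_)
  · exact (L.precompR G).le_of_opNorm₂_le_of_le le_rfl le_rfl (hB (mem_range_self _))
  · have hgt : HasFDerivAt (fun y ↦ g (y - t)) (fderiv 𝕜 g (y - t)) y :=
      (hasFDerivAt_comp_sub t).2 (hg.differentiable one_ne_zero _).hasFDerivAt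
    exact (L (f t)).hasFDerivAt.comp y hgt

end FDeriv

variable {A k : ℂ → ℂ}

theorem dbar_convolution (hA : Integrable A) (hk : ContDiff ℝ 1 k)
    (hkb : BddAbove (range fun z ↦ ‖k z‖)) (hkb' : BddAbove (range fun z ↦ ‖fderiv ℝ k z‖))
    (z : ℂ) : dbar (A ⋆[mul ℝ ℂ] k) z = (A ⋆[mul ℝ ℂ] dbar k) z := by
  have hint : Integrable fun t ↦ (mul ℝ ℂ).precompR ℂ (A t) (fderiv ℝ k (z - t)) :=
    convolutionExistsAt_of_bounded_of_integrable _ hA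
      (hk.continuous_fderiv one_ne_zero).aestronglyMeasurable hkb' z
  rw [dbar_eq_of_hasFDerivAt (hasFDerivAt_convolution_right_of_bddAbove _ hA hk hkb hkb' z),
    convolution_def, convolution_def, ContinuousLinearMap.integral_apply hint,
    ContinuousLinearMap.integral_apply hint, ← integral_const_mul,
    ← integral_add (hint.apply_continuousLinearMap 1)
      ((hint.apply_continuousLinearMap I).const_mul I), ← integral_const_mul]
  refine integral_congr_ae (.of_forall fun t ↦ ?_)
  simp only [precompR, ContinuousLinearMap.comp_apply, compL_apply, mul_apply', dbar]
  ring

end Convolution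

section CauchyKernel

variable {c : ℝ}

/-- The Cauchy kernel `1 / (π z)`, the fundamental solution of `∂̄`. -/
noncomputable def cauchyKernel (z : ℂ) : ℂ := π⁻¹ • z⁻¹

/-- The smooth approximation `conj z / (π (1 + |z|²))` of the Cauchy kernel
`conj z / (π |z|²)`. -/
noncomputable def smoothCauchyKernel (z : ℂ) : ℂ := π⁻¹ • (1 + ‖z‖ ^ 2)⁻¹ • conj z

/-- The density `1 / (π (1 + |z|²)²)` of the Fubini–Study area form of the Riemann sphere,
normalised to total mass one. -/
noncomputable def fubiniStudyDensity (z : ℂ) : ℝ := π⁻¹ * ((1 + ‖z‖ ^ 2) ^ 2)⁻¹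

/-- The smooth approximation of the Cauchy kernel at scale `1 / c`; it tends to `cauchyKernel`
as `c → ∞`. -/
noncomputable def scaledCauchyKernel (c : ℝ) (z : ℂ) : ℂ := c • smoothCauchyKernel (c • z)

theorem hasFDerivAt_smoothCauchyKernel (z : ℂ) :
    HasFDerivAt smoothCauchyKernel
      (π⁻¹ • ((1 + ‖z‖ ^ 2)⁻¹ • (conjCLE : ℂ →L[ℝ] ℂ) +
        (-((1 + ‖z‖ ^ 2) ^ 2)⁻¹ • (2 : ℝ) • innerSL ℝ z).smulRight (conj z))) z := by
  have hsq : HasFDerivAt (fun z : ℂ ↦ 1 + ‖z‖ ^ 2) ((2 : ℝ) • innerSL ℝ z) z := by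
    simpa [two_smul] using (hasStrictFDerivAt_norm_sq z).hasFDerivAt.const_add 1
  have hinv := (hasDerivAt_inv (by positivity : (1 + ‖z‖ ^ 2) ≠ 0)).comp_hasFDerivAt z hsq
  exact (hinv.smul conjCLE.hasFDerivAt).const_smul π⁻¹

theorem contDiff_smoothCauchyKernel {n : WithTop ℕ∞} : ContDiff ℝ n smoothCauchyKernel := by
  have hsq : ContDiff ℝ n fun z : ℂ ↦ 1 + ‖z‖ ^ 2 := contDiff_const.add (contDiff_id.norm_sq ℝ)
  exact ((hsq.inv fun z ↦ by positivity).smul conjCLE.contDiff).const_smul π⁻¹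

theorem dbar_smoothCauchyKernel (z : ℂ) : dbar smoothCauchyKernel z = fubiniStudyDensity z := by
  have hinner_one : inner ℝ z 1 = z.re := by simp [Complex.inner]
  have hinner_I : inner ℝ z I = z.im := by simp [Complex.inner]
  have hr : (((1 + ‖z‖ ^ 2)⁻¹ : ℝ) : ℂ) * (1 + (z.re + z.im * I) * conj z) = 1 := by
    rw [re_add_im, mul_conj', ← ofReal_pow, ← ofReal_one, ← ofReal_add, ← ofReal_mul,
      inv_mul_cancel₀ (by positivity)]
  rw [dbar_eq_of_hasFDerivAt (hasFDerivAt_smoothCauchyKernel z), fubiniStudyDensity, ← inv_pow]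
  generalize (1 + ‖z‖ ^ 2)⁻¹ = r at hr
  simp only [add_apply, smul_apply, ContinuousLinearMap.smulRight_apply, innerSL_apply_apply,
    hinner_one, hinner_I, ContinuousLinearEquiv.coe_coe, conjCLE_apply, map_one, conj_I,
    real_smul, smul_eq_mul, ofReal_mul, ofReal_neg, ofReal_pow, ofReal_ofNat]
  linear_combination (-(π⁻¹ : ℝ) * r : ℂ) * hr - (π⁻¹ : ℝ) / 2 * r * I_sq

theorem bddAbove_range_norm_smoothCauchyKernel :
    BddAbove (range fun z ↦ ‖smoothCauchyKernel z‖) := by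
  refine ⟨π⁻¹ * 1, forall_mem_range.2 fun z ↦ ?_⟩
  rw [smoothCauchyKernel, norm_smul_of_nonneg (by positivity), norm_smul_of_nonneg (by positivity),
    RCLike.norm_conj]
  gcongr
  rw [inv_mul_le_one₀ (by positivity)]
  nlinarith [sq_nonneg (‖z‖ - 1), norm_nonneg z]

theorem bddAbove_range_norm_fderiv_smoothCauchyKernel :
    BddAbove (range fun z ↦ ‖fderiv ℝ smoothCauchyKernel z‖) := by
  refine ⟨π⁻¹ * (1 + 2), forall_mem_range.2 fun z ↦ ?_⟩
  have hconj : ‖(1 + ‖z‖ ^ 2)⁻¹ • (conjCLE : ℂ →L[ℝ] ℂ)‖ ≤ 1 := by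
    rw [norm_smul, Real.norm_of_nonneg (by positivity), conjCLE_norm, mul_one]
    exact inv_le_one_of_one_le₀ (by nlinarith [norm_nonneg z])
  have hinner : ‖(-((1 + ‖z‖ ^ 2) ^ 2)⁻¹ • (2 : ℝ) • innerSL ℝ z).smulRight (conj z)‖ ≤ 2 := by
    rw [ContinuousLinearMap.norm_smulRight_apply, neg_smul, norm_neg,
      norm_smul, Real.norm_of_nonneg (by positivity), norm_smul, Real.norm_two, innerSL_apply_norm,
      RCLike.norm_conj, mul_assoc, inv_mul_le_iff₀ (by positivity)]
    nlinarith [sq_nonneg (‖z‖ ^ 2), sq_nonneg ‖z‖]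
  rw [(hasFDerivAt_smoothCauchyKernel z).fderiv, norm_smul_of_nonneg (by positivity)]
  gcongr
  exact norm_add_le_of_le hconj hinner

theorem contDiff_scaledCauchyKernel {n : WithTop ℕ∞} (c : ℝ) :
    ContDiff ℝ n (scaledCauchyKernel c) :=
  (contDiff_smoothCauchyKernel.comp (contDiff_const_smul c)).const_smul c

theorem dbar_scaledCauchyKernel (c : ℝ) (z : ℂ) :
    dbar (scaledCauchyKernel c) z = (c ^ 2 * fubiniStudyDensity (c • z) : ℝ) := by
  have hdiff : Differentiable ℝ smoothCauchyKernel := fun z ↦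
    (hasFDerivAt_smoothCauchyKernel z).differentiableAt
  rw [ofReal_mul, ← dbar_smoothCauchyKernel, ← dbar_smul_comp_smul hdiff]
  rfl

theorem bddAbove_range_norm_const_smul_comp {X Y E : Type*} [NormedAddCommGroup E]
    [NormedSpace ℝ E] {f : Y → E} (hf : BddAbove (range fun y ↦ ‖f y‖)) (c : ℝ) (g : X → Y) :
    BddAbove (range fun x ↦ ‖c • f (g x)‖) := by
  obtain ⟨B, hB⟩ := hf
  refine ⟨|c| * B, forall_mem_range.2 fun x ↦ ?_⟩
  rw [norm_smul, Real.norm_eq_abs]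
  gcongr
  exact hB (mem_range_self _)

theorem bddAbove_range_norm_scaledCauchyKernel (c : ℝ) :
    BddAbove (range fun z ↦ ‖scaledCauchyKernel c z‖) :=
  bddAbove_range_norm_const_smul_comp bddAbove_range_norm_smoothCauchyKernel c (c • ·)

theorem bddAbove_range_norm_fderiv_scaledCauchyKernel (c : ℝ) :
    BddAbove (range fun z ↦ ‖fderiv ℝ (scaledCauchyKernel c) z‖) := by
  have hdiff (z : ℂ) : DifferentiableAt ℝ (fun ζ : ℂ ↦ smoothCauchyKernel (c • ζ)) z :=
    (contDiff_smoothCauchyKernel.comp (contDiff_const_smul c)).differentiable one_ne_zero z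
  unfold scaledCauchyKernel
  simp only [fderiv_fun_const_smul (hdiff _), fderiv_comp_smul, smul_smul]
  exact bddAbove_range_norm_const_smul_comp bddAbove_range_norm_fderiv_smoothCauchyKernel _ _

theorem norm_cauchyKernel_sub_smoothCauchyKernel (z : ℂ) :
    ‖(cauchyKernel - smoothCauchyKernel) z‖ = π⁻¹ * (‖z‖ * (1 + ‖z‖ ^ 2))⁻¹ := by
  have hdiff : z⁻¹ - (1 + ‖z‖ ^ 2)⁻¹ • conj z = (1 + ‖z‖ ^ 2)⁻¹ • z⁻¹ := by
    rcases eq_or_ne z 0 with rfl | hz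
    · simp
    have hne : (1 + (‖z‖ : ℂ) ^ 2) ≠ 0 := by exact_mod_cast (by positivity : 1 + ‖z‖ ^ 2 ≠ 0)
    simp only [real_smul, ofReal_inv, ofReal_add, ofReal_one, ofReal_pow]
    field_simp
    rw [mul_conj']
    ring
  rw [Pi.sub_apply, cauchyKernel, smoothCauchyKernel, ← smul_sub, hdiff,
    norm_smul_of_nonneg (by positivity), norm_smul_of_nonneg (by positivity), norm_inv, mul_inv_rev]

theorem integrable_cauchyKernel_sub_smoothCauchyKernel :
    Integrable (cauchyKernel - smoothCauchyKernel) := by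
  have hmeas : AEStronglyMeasurable (cauchyKernel - smoothCauchyKernel) :=
    ((measurable_inv.const_smul π⁻¹).aestronglyMeasurable).sub
      (contDiff_smoothCauchyKernel (n := 0)).continuous.aestronglyMeasurable
  rw [← integrable_norm_iff hmeas]
  simp only [norm_cauchyKernel_sub_smoothCauchyKernel]
  refine (integrable_fun_norm_addHaar volume
    (f := fun r : ℝ ↦ π⁻¹ * (r * (1 + r ^ 2))⁻¹)).2 ?_
  refine (integrable_inv_one_add_sq.const_mul π⁻¹).integrableOn.congr_fun (fun r hr ↦ ?_)
    measurableSet_Ioi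
  have hr : r ≠ 0 := (mem_Ioi.1 hr).ne'
  simp only [finrank_real_complex, Nat.add_one_sub_one, pow_one, smul_eq_mul]
  field_simp

theorem cauchyKernel_sub_scaledCauchyKernel (hc : c ≠ 0) :
    cauchyKernel - scaledCauchyKernel c =
      fun z ↦ c • (cauchyKernel - smoothCauchyKernel) (c • z) := by
  ext z
  have hscale : c • cauchyKernel (c • z) = cauchyKernel z := by
    rw [cauchyKernel, cauchyKernel, smul_inv₀, smul_comm, smul_inv_smul₀ hc]
  simp only [Pi.sub_apply, smul_sub, scaledCauchyKernel, hscale]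

theorem integrable_cauchyKernel_sub_scaledCauchyKernel (hc : c ≠ 0) :
    Integrable (cauchyKernel - scaledCauchyKernel c) := by
  rw [cauchyKernel_sub_scaledCauchyKernel hc]
  exact (integrable_cauchyKernel_sub_smoothCauchyKernel.comp_smul hc).smul c

theorem integral_norm_cauchyKernel_sub_scaledCauchyKernel (hc : 0 < c) :
    ∫ z, ‖(cauchyKernel - scaledCauchyKernel c) z‖ =
      c⁻¹ * ∫ z, ‖(cauchyKernel - smoothCauchyKernel) z‖ := by
  simp only [cauchyKernel_sub_scaledCauchyKernel hc.ne', norm_smul_of_nonneg hc.le]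
  rw [integral_const_mul,
    Measure.integral_comp_smul volume (fun z ↦ ‖(cauchyKernel - smoothCauchyKernel) z‖),
    finrank_real_complex, abs_of_pos (by positivity), smul_eq_mul, ← mul_assoc]
  congr 1
  field_simp

theorem fubiniStudyDensity_nonneg (z : ℂ) : 0 ≤ fubiniStudyDensity z := by
  unfold fubiniStudyDensity
  positivity

theorem integral_Ioi_mul_inv_one_add_sq_sq :
    ∫ r in Ioi (0 : ℝ), r * ((1 + r ^ 2) ^ 2)⁻¹ = 1 / 2 := by
  have hderiv (r : ℝ) :
      HasDerivAt (fun r ↦ -(1 / 2) * (1 + r ^ 2)⁻¹) (r * ((1 + r ^ 2) ^ 2)⁻¹) r := by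
    have hinv := ((hasDerivAt_pow 2 r).const_add 1).fun_inv (by positivity)
    refine (hinv.const_mul _).congr_deriv ?_
    field_simp
    norm_num
  have hlim : Tendsto (fun r : ℝ ↦ -(1 / 2) * (1 + r ^ 2)⁻¹) atTop (𝓝 (-(1 / 2) * 0)) :=
    (tendsto_inv_atTop_zero.comp
      (tendsto_atTop_add_const_left _ 1 (tendsto_pow_atTop two_ne_zero))).const_mul _
  rw [integral_Ioi_of_hasDerivAt_of_nonneg' (fun r _ ↦ hderiv r)
    (fun r (hr : 0 < r) ↦ by positivity) hlim]
  norm_num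

theorem integral_fubiniStudyDensity : ∫ z, fubiniStudyDensity z = 1 := by
  have hpolar := integral_fun_norm_addHaar (volume : Measure ℂ) fun r : ℝ ↦ ((1 + r ^ 2) ^ 2)⁻¹
  simp only [finrank_real_complex, Nat.add_one_sub_one, pow_one, smul_eq_mul,
    integral_Ioi_mul_inv_one_add_sq_sq] at hpolar
  unfold fubiniStudyDensity
  rw [integral_const_mul, hpolar, Measure.real, volume_ball, ENNReal.ofReal_one, one_pow, one_mul,
    ENNReal.coe_toReal, NNReal.coe_real_pi, nsmul_eq_mul]
  field_simp
  norm_num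

theorem tendsto_norm_sq_mul_fubiniStudyDensity :
    Tendsto (fun z ↦ ‖z‖ ^ 2 * fubiniStudyDensity z) (Bornology.cobounded ℂ) (𝓝 0) := by
  have hlim : Tendsto (fun z : ℂ ↦ π⁻¹ * (1 + ‖z‖ ^ 2)⁻¹) (Bornology.cobounded ℂ)
      (𝓝 (π⁻¹ * 0)) :=
    (tendsto_inv_atTop_zero.comp (tendsto_atTop_add_const_left _ 1
      ((tendsto_pow_atTop two_ne_zero).comp tendsto_norm_cobounded_atTop))).const_mul _
  rw [mul_zero] at hlim
  refine squeeze_zero (fun z ↦ mul_nonneg (sq_nonneg _) (fubiniStudyDensity_nonneg z))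
    (fun z ↦ ?_) hlim
  rw [fubiniStudyDensity, mul_left_comm, sq (1 + _), mul_inv, ← mul_assoc (‖z‖ ^ 2)]
  gcongr
  refine mul_le_of_le_one_left (by positivity) ?_
  rw [← div_eq_mul_inv, div_le_one (by positivity)]
  linarith

theorem integrable_dbar_scaledCauchyKernel (hc : c ≠ 0) :
    Integrable (dbar (scaledCauchyKernel c)) := by
  simp only [funext (dbar_scaledCauchyKernel c)]
  exact (((integrable_of_integral_eq_one integral_fubiniStudyDensity).comp_smul hc).const_mul
    (c ^ 2)).ofReal

theorem integral_norm_dbar_scaledCauchyKernel (hc : c ≠ 0) :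
    ∫ z, ‖dbar (scaledCauchyKernel c) z‖ = 1 := by
  have hnorm (z : ℂ) : ‖dbar (scaledCauchyKernel c) z‖ = c ^ 2 * fubiniStudyDensity (c • z) := by
    rw [dbar_scaledCauchyKernel, norm_real, Real.norm_of_nonneg
      (mul_nonneg (sq_nonneg c) (fubiniStudyDensity_nonneg _))]
  simp only [hnorm]
  rw [integral_const_mul, Measure.integral_comp_smul, integral_fubiniStudyDensity,
    finrank_real_complex, abs_of_pos (by positivity), smul_eq_mul, mul_one]
  exact mul_inv_cancel₀ (by positivity)

theorem bddAbove_range_norm_dbar_scaledCauchyKernel (c : ℝ) :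
    BddAbove (range fun z ↦ ‖dbar (scaledCauchyKernel c) z‖) :=
  (bddAbove_range_norm_fderiv_scaledCauchyKernel c).range_mono _ (norm_dbar_le_norm_fderiv _)

theorem continuous_dbar_scaledCauchyKernel (c : ℝ) : Continuous (dbar (scaledCauchyKernel c)) :=
  continuousOn_univ.1 (continuousOn_dbar isOpen_univ (contDiff_scaledCauchyKernel c).contDiffOn)

end CauchyKernel

section CauchyTransform

open ContinuousLinearMap

variable {A : ℂ → ℂ} {M c : ℝ} {z : ℂ}

theorem differentiable_convolution_scaledCauchyKernel (hA : Integrable A) (c : ℝ) :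
    Differentiable ℝ (A ⋆[mul ℝ ℂ] scaledCauchyKernel c) := fun z ↦
  (hasFDerivAt_convolution_right_of_bddAbove _ hA (contDiff_scaledCauchyKernel c)
    (bddAbove_range_norm_scaledCauchyKernel c)
    (bddAbove_range_norm_fderiv_scaledCauchyKernel c) z).differentiableAt

theorem dbar_convolution_scaledCauchyKernel (hA : Integrable A) (c : ℝ) :
    dbar (A ⋆[mul ℝ ℂ] scaledCauchyKernel c) = A ⋆[mul ℝ ℂ] dbar (scaledCauchyKernel c) :=
  funext <| dbar_convolution hA (contDiff_scaledCauchyKernel c)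
    (bddAbove_range_norm_scaledCauchyKernel c) (bddAbove_range_norm_fderiv_scaledCauchyKernel c)

theorem norm_convolution_mul_le (hM : ∀ z, ‖A z‖ ≤ M) {k : ℂ → ℂ} (hk : Integrable k) (z : ℂ) :
    ‖(A ⋆[mul ℝ ℂ] k) z‖ ≤ M * ∫ ζ, ‖k ζ‖ := by
  simpa [opNorm_mul] using norm_convolution_le_of_bounded (mul ℝ ℂ) hM hk z

theorem convolution_cauchyKernel_sub_convolution_scaledCauchyKernel (hA : Integrable A)
    (hM : ∀ z, ‖A z‖ ≤ M) (hc : c ≠ 0) (z : ℂ) :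
    (A ⋆[mul ℝ ℂ] cauchyKernel) z - (A ⋆[mul ℝ ℂ] scaledCauchyKernel c) z =
      (A ⋆[mul ℝ ℂ] (cauchyKernel - scaledCauchyKernel c)) z := by
  have hscaled : ConvolutionExistsAt A (scaledCauchyKernel c) z (mul ℝ ℂ) :=
    convolutionExistsAt_of_bounded_of_integrable _ hA
      (contDiff_scaledCauchyKernel (n := 0) c).continuous.aestronglyMeasurable
      (bddAbove_range_norm_scaledCauchyKernel c) z
  have hdiff : ConvolutionExistsAt A (cauchyKernel - scaledCauchyKernel c) z (mul ℝ ℂ) :=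
    convolutionExistsAt_of_integrable_of_bounded _ hA.aestronglyMeasurable hM
      (integrable_cauchyKernel_sub_scaledCauchyKernel hc) z
  rw [sub_eq_iff_eq_add', ← hscaled.distrib_add hdiff, add_sub_cancel]

theorem tendstoUniformly_convolution_scaledCauchyKernel (hA : Integrable A)
    (hM : ∀ z, ‖A z‖ ≤ M) :
    TendstoUniformly (fun c ↦ A ⋆[mul ℝ ℂ] scaledCauchyKernel c) (A ⋆[mul ℝ ℂ] cauchyKernel)
      atTop := by
  set D := ∫ z, ‖(cauchyKernel - smoothCauchyKernel) z‖
  have hlim : Tendsto (fun c : ℝ ↦ M * (c⁻¹ * D)) atTop (𝓝 0) := by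
    simpa using (tendsto_inv_atTop_zero.mul_const D).const_mul M
  refine Metric.tendstoUniformly_iff.2 fun ε hε ↦ ?_
  filter_upwards [hlim.eventually_lt_const hε, eventually_gt_atTop 0] with c hcε hc z
  rw [dist_eq_norm, convolution_cauchyKernel_sub_convolution_scaledCauchyKernel hA hM hc.ne']
  refine (norm_convolution_mul_le hM ?_ z).trans_lt ?_
  · exact integrable_cauchyKernel_sub_scaledCauchyKernel hc.ne'
  · rwa [integral_norm_cauchyKernel_sub_scaledCauchyKernel hc]

theorem continuous_convolution_cauchyKernel (hA : Integrable A) (hM : ∀ z, ‖A z‖ ≤ M) :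
    Continuous (A ⋆[mul ℝ ℂ] cauchyKernel) :=
  (tendstoUniformly_convolution_scaledCauchyKernel hA hM).continuous <| .of_forall fun c ↦
    (differentiable_convolution_scaledCauchyKernel hA c).continuous

theorem continuous_convolution_dbar_scaledCauchyKernel (hA : Integrable A) (c : ℝ) :
    Continuous (A ⋆[mul ℝ ℂ] dbar (scaledCauchyKernel c)) :=
  (bddAbove_range_norm_dbar_scaledCauchyKernel c).continuous_convolution_right_of_integrable _ hA
    (continuous_dbar_scaledCauchyKernel c)

theorem norm_convolution_dbar_scaledCauchyKernel_le (hM : ∀ z, ‖A z‖ ≤ M) (hc : c ≠ 0) (z : ℂ) :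
    ‖(A ⋆[mul ℝ ℂ] dbar (scaledCauchyKernel c)) z‖ ≤ M := by
  simpa [integral_norm_dbar_scaledCauchyKernel hc] using
    norm_convolution_mul_le hM (integrable_dbar_scaledCauchyKernel hc) z

theorem tendsto_convolution_dbar_scaledCauchyKernel (hA : Integrable A) (hz : ContinuousAt A z) :
    Tendsto (fun c ↦ (A ⋆[mul ℝ ℂ] dbar (scaledCauchyKernel c)) z) atTop (𝓝 (A z)) := by
  have hlim := tendsto_integral_comp_smul_smul_of_integrable' fubiniStudyDensity_nonneg
    integral_fubiniStudyDensity
    (by simpa only [finrank_real_complex] using tendsto_norm_sq_mul_fubiniStudyDensity) hA hz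
  refine hlim.congr fun c ↦ integral_congr_ae (.of_forall fun t ↦ ?_)
  simp only [finrank_real_complex, mul_apply', dbar_scaledCauchyKernel, real_smul, mul_comm (A t)]

theorem tendstoBoundedlyOn_mul_convolution_dbar_scaledCauchyKernel {U : Set ℂ} {v : ℂ → ℂ}
    (hA : Integrable A) (hM : ∀ z, ‖A z‖ ≤ M) (hv : ContinuousOn v U)
    (hAv : ∀ z ∈ U, v z ≠ 0 → ContinuousAt A z) :
    TendstoBoundedlyOn (fun c z ↦ v z * (A ⋆[mul ℝ ℂ] dbar (scaledCauchyKernel c)) z)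
      (fun z ↦ v z * A z) atTop U where
  tendsto z hz := by
    rcases eq_or_ne (v z) 0 with hvz | hvz
    · simp [hvz]
    · exact (tendsto_convolution_dbar_scaledCauchyKernel hA (hAv z hz hvz)).const_mul _
  eventually_bounded K hKU hK := by
    obtain ⟨B, hB⟩ := hK.exists_bound_of_continuousOn (hv.mono hKU)
    refine ⟨B * M, ?_⟩
    filter_upwards [eventually_ne_atTop 0] with c hc z hz
    exact norm_mul_le_of_le (hB z hz) (norm_convolution_dbar_scaledCauchyKernel_le hM hc z)

end CauchyTransform

section SimilarityPrinciple

open ContinuousLinearMap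

variable {U : Set ℂ} {v A : ℂ → ℂ} {M : ℝ} {z : ℂ}

theorem differentiableOn_mul_cexp_neg_convolution_cauchyKernel (hU : IsOpen U)
    (hv : ContDiffOn ℝ 1 v U) (hA : Integrable A) (hM : ∀ z, ‖A z‖ ≤ M)
    (hAv : ∀ z ∈ U, v z ≠ 0 → ContinuousAt A z) (hdbar : ∀ z ∈ U, dbar v z = v z * A z) :
    DifferentiableOn ℂ (fun z ↦ v z * exp (-(A ⋆[mul ℝ ℂ] cauchyKernel) z)) U := by
  have hvd (z) (hz : z ∈ U) : DifferentiableAt ℝ v z :=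
    (hv.differentiableOn one_ne_zero).differentiableAt (hU.mem_nhds hz)
  set W : ℂ → ℂ := A ⋆[mul ℝ ℂ] cauchyKernel
  set Wc : ℝ → ℂ → ℂ := fun c ↦ A ⋆[mul ℝ ℂ] scaledCauchyKernel c with hWc_def
  set Dc : ℝ → ℂ → ℂ := fun c ↦ A ⋆[mul ℝ ℂ] dbar (scaledCauchyKernel c)
  have hW : Continuous W := continuous_convolution_cauchyKernel hA hM
  have hWc (c) : Differentiable ℝ (Wc c) := differentiable_convolution_scaledCauchyKernel hA c
  have hDc (c) : Continuous (Dc c) := continuous_convolution_dbar_scaledCauchyKernel hA c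
  have hdbar_c (c) : EqOn (dbar fun z ↦ v z * exp (-Wc c z))
      (fun z ↦ (dbar v z - v z * Dc c z) * exp (-Wc c z)) U := fun z hz ↦ by
    rw [dbar_mul_cexp_neg (hvd z hz) (hWc c z), hWc_def,
      dbar_convolution_scaledCauchyKernel hA]
  have hexp : TendstoBoundedlyOn (fun c z ↦ exp (-Wc c z)) (fun z ↦ exp (-W z)) atTop U :=
    TendstoBoundedlyOn.complexExp <| .of_tendstoUniformlyOn
      (tendstoUniformly_convolution_scaledCauchyKernel hA hM).neg.tendstoUniformlyOn
      hW.neg.continuousOn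
  refine TendstoBoundedlyOn.differentiableOn_of_dbar (l := atTop)
    (F := fun c z ↦ v z * exp (-Wc c z)) hU (hv.continuousOn.mul hW.neg.cexp.continuousOn)
    (fun c z hz ↦ ((hvd z hz).mul (hWc c z).neg.cexp).differentiableWithinAt) (fun c ↦ ?_)
    ((TendstoBoundedlyOn.const _ hv.continuousOn).mul hexp) ?_
  · exact (((continuousOn_dbar hU hv).sub (hv.continuousOn.mul (hDc c).continuousOn)).mul
      (hWc c).continuous.neg.cexp.continuousOn).congr (hdbar_c c)
  · refine (((TendstoBoundedlyOn.const _ (continuousOn_dbar hU hv)).sub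
      (tendstoBoundedlyOn_mul_convolution_dbar_scaledCauchyKernel hA hM hv.continuousOn
        hAv)).mul hexp).congr (fun c ↦ (hdbar_c c).symm) fun z hz ↦ ?_
    simp only [hdbar z hz, sub_self, zero_mul, Pi.zero_apply]

/-- The logarithmic `∂̄`-derivative of `v`. By the convention `x / 0 = 0` it vanishes at the zeros
of `v`. -/
noncomputable def logDbar (v : ℂ → ℂ) : ℂ → ℂ := dbar v / v

theorem mul_logDbar (h : ‖dbar v z‖ ≤ M * ‖v z‖) : v z * logDbar v z = dbar v z :=
  mul_div_cancel_of_imp' fun hvz ↦ by simpa [hvz] using h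

theorem norm_logDbar_le (h : ‖dbar v z‖ ≤ M * ‖v z‖) : ‖logDbar v z‖ ≤ |M| := by
  rw [logDbar, Pi.div_apply, norm_div]
  refine div_le_of_le_mul₀ (norm_nonneg _) (abs_nonneg _) (h.trans ?_)
  gcongr
  exact le_abs_self M

theorem norm_indicator_logDbar_le (hM : ∀ z ∈ U, ‖dbar v z‖ ≤ M * ‖v z‖) (z : ℂ) :
    ‖U.indicator (logDbar v) z‖ ≤ |M| := by
  rw [norm_indicator_eq_indicator_norm]
  exact indicator_le' (fun z hz ↦ norm_logDbar_le (hM z hz)) (fun _ _ ↦ abs_nonneg M) z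

theorem continuousAt_indicator_logDbar (hU : IsOpen U) (hv : ContDiffOn ℝ 1 v U) (hz : z ∈ U)
    (hvz : v z ≠ 0) : ContinuousAt (U.indicator (logDbar v)) z := by
  have hUz : U ∈ 𝓝 z := hU.mem_nhds hz
  refine ContinuousAt.congr ?_ (eqOn_indicator.symm.eventuallyEq_of_mem hUz)
  exact ((continuousOn_dbar hU hv).continuousAt hUz).div (hv.continuousOn.continuousAt hUz) hvz

theorem integrable_indicator_logDbar (hU : IsOpen U) (hμ : volume U ≠ ⊤)
    (hv : ContDiffOn ℝ 1 v U) (hM : ∀ z ∈ U, ‖dbar v z‖ ≤ M * ‖v z‖) :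
    Integrable (U.indicator (logDbar v)) := by
  have hmeas : AEStronglyMeasurable (logDbar v) (volume.restrict U) :=
    (((continuousOn_dbar hU hv).aemeasurable hU.measurableSet).div
      (hv.continuousOn.aemeasurable hU.measurableSet)).aestronglyMeasurable
  exact (integrable_indicator_iff hU.measurableSet).2 <| .of_bound hμ.lt_top hmeas |M| <|
    ae_restrict_of_forall_mem hU.measurableSet fun z hz ↦ norm_logDbar_le (hM z hz)

end SimilarityPrinciple

theorem carleman_similarity_principle_general {U : Set ℂ} (hU : IsOpen U) (hμ : volume U ≠ ⊤)
    {v : ℂ → ℂ} (hv : ContDiffOn ℝ 1 v U) {M : ℝ} (hM : ∀ z ∈ U, ‖dbar v z‖ ≤ M * ‖v z‖) :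
    ∃ φ σ : ℂ → ℂ, Continuous φ ∧ DifferentiableOn ℂ σ U ∧ ∀ z ∈ U, v z = exp (φ z) * σ z := by
  set A : ℂ → ℂ := U.indicator (logDbar v)
  have hA : Integrable A := integrable_indicator_logDbar hU hμ hv hM
  have hA_le : ∀ z, ‖A z‖ ≤ |M| := norm_indicator_logDbar_le hM
  have hdbar (z) (hz : z ∈ U) : dbar v z = v z * A z := by
    simp only [A, indicator_of_mem hz, mul_logDbar (hM z hz)]
  set φ : ℂ → ℂ := A ⋆[ContinuousLinearMap.mul ℝ ℂ] cauchyKernel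
  refine ⟨φ, fun z ↦ v z * exp (-φ z), continuous_convolution_cauchyKernel hA hA_le,
    differentiableOn_mul_cexp_neg_convolution_cauchyKernel hU hv hA hA_le
      (fun z hz hvz ↦ continuousAt_indicator_logDbar hU hv hz hvz) hdbar, fun z _ ↦ ?_⟩
  rw [mul_left_comm, ← exp_add, add_neg_cancel, exp_zero, mul_one]

theorem exists_norm_dbar_le_mul_norm {U : Set ℂ} {C₁ C₂ v : ℂ → ℂ}
    (hC₁ : ∃ M : ℝ, ∀ z ∈ U, ‖C₁ z‖ ≤ M) (hC₂ : ∃ M : ℝ, ∀ z ∈ U, ‖C₂ z‖ ≤ M)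
    (heq : ∀ z ∈ U, dbar v z + C₁ z * v z + C₂ z * conj (v z) = 0) :
    ∃ M : ℝ, ∀ z ∈ U, ‖dbar v z‖ ≤ M * ‖v z‖ := by
  obtain ⟨M₁, hM₁⟩ := hC₁
  obtain ⟨M₂, hM₂⟩ := hC₂
  refine ⟨M₁ + M₂, fun z hz ↦ ?_⟩
  calc ‖dbar v z‖ = ‖C₁ z * v z + C₂ z * conj (v z)‖ := by
        rw [← norm_neg (dbar v z),
          neg_eq_of_add_eq_zero_right ((add_assoc _ _ _).symm.trans (heq z hz))]
    _ ≤ M₁ * ‖v z‖ + M₂ * ‖v z‖ :=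
        norm_add_le_of_le (norm_mul_le_of_le (hM₁ z hz) le_rfl)
          (norm_mul_le_of_le (hM₂ z hz) (RCLike.norm_conj _).le)
    _ = (M₁ + M₂) * ‖v z‖ := by ring

/-- Carleman similarity principle (smooth version). -/
theorem carleman_similarity_principle
    (ε : ℝ) (hε : 0 < ε)
    (C₁ C₂ : ℂ → ℂ)
    (hC₁cont : ContinuousOn C₁ (ball (0 : ℂ) ε))
    (hC₂cont : ContinuousOn C₂ (ball (0 : ℂ) ε))
    (hC₁bdd : ∃ M : ℝ, ∀ z ∈ ball (0 : ℂ) ε, ‖C₁ z‖ ≤ M)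
    (hC₂bdd : ∃ M : ℝ, ∀ z ∈ ball (0 : ℂ) ε, ‖C₂ z‖ ≤ M)
    (v : ℂ → ℂ) (hv : ContDiffOn ℝ 1 v (ball (0 : ℂ) ε))
    (heq : ∀ z ∈ ball (0 : ℂ) ε,
      dbar v z + C₁ z * v z + C₂ z * (starRingEnd ℂ) (v z) = 0) :
    ∃ δ : ℝ, 0 < δ ∧ δ ≤ ε ∧
      ∃ (Φ σ : ℂ → ℂ),
        ContinuousOn Φ (ball (0 : ℂ) δ) ∧
        (∀ z ∈ ball (0 : ℂ) δ, Φ z ≠ 0) ∧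
        DifferentiableOn ℂ σ (ball (0 : ℂ) δ) ∧
        ∀ z ∈ ball (0 : ℂ) δ, v z = Φ z * σ z := by
  obtain ⟨M, hM⟩ := exists_norm_dbar_le_mul_norm hC₁bdd hC₂bdd heq
  obtain ⟨φ, σ, hφ, hσ, hvφσ⟩ :=
    carleman_similarity_principle_general isOpen_ball measure_ball_lt_top.ne hv hM
  exact ⟨ε, hε, le_rfl, fun z ↦ exp (φ z), σ, hφ.cexp.continuousOn, fun z _ ↦ exp_ne_zero _, hσ,
    hvφσ⟩
end

section
/- Let Ω ⊆ ℂ be a connected open set, let C₁, C₂ : Ω → ℂ be continuous, and let v : Ω → ℂ be continuously differentiable (over ℝ) with ∂̄v(z) + C₁(z)·v(z) + C₂(z)·conj(v(z)) = 0 for all z ∈ Ω. If v vanishes identically on some nonempty open subset of Ω, then v vanishes identically on Ω. -/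
open Complex Metric

/-!
Vanishing spreads from a point `a` to a whole disc around it by a Carleman estimate with the
holomorphic weights `(z - a)⁻ⁿ`, which commute with `∂̄`. The unweighted inequality
`‖u‖ ≤ 4 R sup ‖∂̄u‖`, for `u` supported in a disc of radius `R`, comes from differentiating circle
averages in the radius: the tangential derivative integrates to zero over a circle, so the radial
derivative may be replaced by `2 e^{-iθ} ∂̄u`. On small discs the hypothesis `‖∂̄v‖ ≤ M ‖v‖` is
absorbed, and `n → ∞` kills the error caused by the cutoff.
-/

open Filter Real Set Topology Asymptotics ComplexConjugate

section Dbar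

variable {f g : ℂ → ℂ} {z : ℂ}

lemma dbar_congr_of_eventuallyEq (h : f =ᶠ[𝓝 z] g) : dbar f z = dbar g z := by
  rw [dbar, dbar, h.fderiv_eq]

lemma dbar_eq_zero_of_notMem_tsupport (hz : z ∉ tsupport f) : dbar f z = 0 := by
  rw [dbar, (notMem_tsupport_iff_eventuallyEq.1 hz).fderiv_eq]
  simp

lemma dbar_eq_zero_of_differentiableAt (hf : DifferentiableAt ℂ f z) : dbar f z = 0 := by
  have hI : fderiv ℂ f z I = I * fderiv ℂ f z 1 := by
    rw [← smul_eq_mul, ← map_smul, smul_eq_mul, mul_one]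
  rw [dbar, (hf.hasFDerivAt.restrictScalars ℝ).fderiv]
  simp only [ContinuousLinearMap.coe_restrictScalars', hI]
  linear_combination (1 / 2) * fderiv ℂ f z 1 * I_mul_I

lemma dbar_mul (hf : DifferentiableAt ℝ f z) (hg : DifferentiableAt ℝ g z) :
    dbar (f * g) z = dbar f z * g z + f z * dbar g z := by
  simp only [dbar, fderiv_mul hf hg, add_apply, smul_apply, smul_eq_mul]
  ring

lemma fderiv_add_I_mul_fderiv_mul_I (f : ℂ → ℂ) (z w : ℂ) :
    fderiv ℝ f z w + I * fderiv ℝ f z (w * I) = 2 * conj w * dbar f z := by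
  have hw : w = w.re • (1 : ℂ) + w.im • I := by simp
  have hwI : w * I = w.re • I - w.im • (1 : ℂ) := by apply Complex.ext <;> simp
  have hconj : conj w = w.re - w.im * I := by apply Complex.ext <;> simp
  have hfw : fderiv ℝ f z w = w.re * fderiv ℝ f z 1 + w.im * fderiv ℝ f z I := by
    conv_lhs => rw [hw, map_add, map_smul, map_smul, real_smul, real_smul]
  rw [hfw, hwI, hconj, dbar, map_sub, map_smul, map_smul, real_smul, real_smul]
  linear_combination (w.im * fderiv ℝ f z I) * I_mul_I

lemma continuous_dbar (hf : ContDiff ℝ 1 f) : Continuous (dbar f) := by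
  have := hf.continuous_fderiv one_ne_zero
  unfold dbar
  fun_prop

end Dbar

section CircleAverage

variable {E : Type*} [NormedAddCommGroup E] [NormedSpace ℝ E] {u : ℂ → E}

lemma hasDerivAt_circleMap_radius (c : ℂ) (r θ : ℝ) :
    HasDerivAt (fun s ↦ circleMap c s θ) (circleMap 0 1 θ) r := by
  simpa [circleMap] using ((ofRealCLM.hasDerivAt (x := r)).mul_const (exp (θ * I))).const_add c

lemma hasDerivAt_circleAverage (hu : ContDiff ℝ 1 u) (c : ℂ) (r : ℝ) :
    HasDerivAt (circleAverage u c)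
      ((2 * π)⁻¹ • ∫ θ in 0..2 * π, fderiv ℝ u (circleMap c r θ) (circleMap 0 1 θ)) r := by
  have hfderiv := hu.continuous_fderiv one_ne_zero
  have hcont := hu.continuous
  obtain ⟨K, hK⟩ := (isCompact_closedBall c (|r| + 1)).exists_bound_of_continuousOn
    hfderiv.continuousOn
  refine (intervalIntegral.hasDerivAt_integral_of_dominated_loc_of_deriv_le
    (F := fun s θ ↦ u (circleMap c s θ))
    (F' := fun s θ ↦ fderiv ℝ u (circleMap c s θ) (circleMap 0 1 θ)) (bound := fun _ ↦ K)
    (ball_mem_nhds r one_pos) (.of_forall fun s ↦ ?_) ?_ ?_ (.of_forall fun θ _ s hs ↦ ?_)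
    intervalIntegrable_const (.of_forall fun θ _ s _ ↦ ?_)).2.const_smul _
  · exact Continuous.aestronglyMeasurable (by fun_prop)
  · exact Continuous.intervalIntegrable (by fun_prop) _ _
  · exact Continuous.aestronglyMeasurable (by fun_prop)
  · have hs' : circleMap c s θ ∈ closedBall c (|r| + 1) := by
      have := abs_sub_abs_le_abs_sub s r
      rw [mem_ball, Real.dist_eq] at hs
      rw [mem_closedBall, dist_eq_norm, circleMap_sub_center, norm_circleMap_zero]
      linarith
    simpa using (fderiv ℝ u (circleMap c s θ)).le_of_opNorm_le (hK _ hs') (circleMap 0 1 θ)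
  · exact ((hu.differentiable one_ne_zero _).hasFDerivAt).comp_hasDerivAt s
      (hasDerivAt_circleMap_radius c s θ)

lemma integral_fderiv_circleMap_tangent [CompleteSpace E] (hu : ContDiff ℝ 1 u) (c : ℂ) (r : ℝ) :
    ∫ θ in 0..2 * π, fderiv ℝ u (circleMap c r θ) (circleMap 0 1 θ * I) = 0 := by
  wlog hr : r ≠ 0 generalizing u c r
  · -- At `r = 0` the integrand is that of the linear map `fderiv ℝ u c` on the unit circle.
    have := this (fderiv ℝ u c).contDiff 0 1 one_ne_zero
    simpa [not_not.1 hr] using this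
  have := hu.continuous_fderiv one_ne_zero
  have hderiv (θ : ℝ) : HasDerivAt (u ∘ circleMap c r)
      (r • fderiv ℝ u (circleMap c r θ) (circleMap 0 1 θ * I)) θ := by
    have := (hu.differentiable one_ne_zero _).hasFDerivAt.comp_hasDerivAt θ
      (hasDerivAt_circleMap c r θ)
    rw [← map_smul, real_smul, ← mul_assoc]
    simpa only [circleMap_zero, ofReal_one, one_mul] using this
  have hftc := intervalIntegral.integral_eq_sub_of_hasDerivAt (a := 0) (b := 2 * π)
    (fun θ _ ↦ hderiv θ) (Continuous.intervalIntegrable (by fun_prop) _ _)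
  have hperiodic : (u ∘ circleMap c r) (2 * π) = (u ∘ circleMap c r) 0 := by
    simpa using ((periodic_circleMap c r).comp u) 0
  rw [intervalIntegral.integral_smul, hperiodic, sub_self] at hftc
  exact (smul_eq_zero.1 hftc).resolve_left hr

end CircleAverage

section SupEstimate

variable {u : ℂ → ℂ} {a : ℂ} {R N : ℝ}

lemma hasDerivAt_circleAverage_dbar (hu : ContDiff ℝ 1 u) (c : ℂ) (r : ℝ) :
    HasDerivAt (circleAverage u c)
      ((2 * π)⁻¹ • ∫ θ in 0..2 * π, 2 * conj (circleMap 0 1 θ) * dbar u (circleMap c r θ)) r := by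
  have := hu.continuous_fderiv one_ne_zero
  have hradial : ∫ θ in 0..2 * π, 2 * conj (circleMap 0 1 θ) * dbar u (circleMap c r θ) =
      ∫ θ in 0..2 * π, fderiv ℝ u (circleMap c r θ) (circleMap 0 1 θ) := by
    simp only [← fderiv_add_I_mul_fderiv_mul_I]
    rw [intervalIntegral.integral_add, intervalIntegral.integral_const_mul,
      integral_fderiv_circleMap_tangent hu, mul_zero, add_zero]
    all_goals exact Continuous.intervalIntegrable (by fun_prop) _ _
  exact hradial ▸ hasDerivAt_circleAverage hu c r

lemma norm_circleAverage_sub_le_of_norm_dbar_le (hu : ContDiff ℝ 1 u) (hN : ∀ z, ‖dbar u z‖ ≤ N)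
    (c : ℂ) {r : ℝ} (hr : 0 ≤ r) : ‖circleAverage u c r - u c‖ ≤ 2 * N * r := by
  have hbound (s : ℝ) : ‖(2 * π)⁻¹ • ∫ θ in 0..2 * π,
      2 * conj (circleMap 0 1 θ) * dbar u (circleMap c s θ)‖ ≤ 2 * N := by
    have hint := intervalIntegral.norm_integral_le_of_norm_le_const (a := 0) (b := 2 * π)
      (f := fun θ ↦ 2 * conj (circleMap 0 1 θ) * dbar u (circleMap c s θ)) (C := 2 * N)
      fun θ _ ↦ by simpa using hN _
    rw [norm_smul, norm_inv, norm_of_nonneg two_pi_pos.le, inv_mul_le_iff₀ two_pi_pos,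
      mul_comm (2 * π)]
    rwa [sub_zero, abs_of_pos two_pi_pos] at hint
  simpa using norm_image_sub_le_of_norm_deriv_le_segment'
    (fun s _ ↦ (hasDerivAt_circleAverage_dbar hu c s).hasDerivWithinAt)
    (fun s _ ↦ hbound s) r (right_mem_Icc.2 hr)

lemma norm_le_of_norm_dbar_le (hu : ContDiff ℝ 1 u) (hR : 0 ≤ R) (huR : tsupport u ⊆ ball a R)
    (hN : ∀ z, ‖dbar u z‖ ≤ N) (z : ℂ) : ‖u z‖ ≤ 4 * R * N := by
  have hu0 {ζ : ℂ} (hζ : ζ ∉ ball a R) : u ζ = 0 :=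
    image_eq_zero_of_notMem_tsupport fun h ↦ hζ (huR h)
  by_cases hz : z ∈ ball a R
  · have havg : circleAverage u z (2 * R) = 0 := by
      refine circleAverage_const_on_circle fun ζ hζ ↦ hu0 fun hζR ↦ ?_
      rw [mem_sphere, abs_of_nonneg (by positivity)] at hζ
      linarith [dist_triangle_right ζ z a, mem_ball.1 hz, mem_ball.1 hζR]
    have h := norm_circleAverage_sub_le_of_norm_dbar_le hu hN z (r := 2 * R) (by positivity)
    rw [havg, zero_sub, norm_neg] at h
    linarith
  · have hN0 : 0 ≤ N := (norm_nonneg _).trans (hN 0)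
    rw [hu0 hz, norm_zero]
    positivity

end SupEstimate

lemma contDiff_of_contDiffAt_tsupport {𝕜 E F : Type*} [NontriviallyNormedField 𝕜]
    [NormedAddCommGroup E] [NormedSpace 𝕜 E] [NormedAddCommGroup F] [NormedSpace 𝕜 F]
    {n : WithTop ℕ∞} {f : E → F} (hf : ∀ x ∈ tsupport f, ContDiffAt 𝕜 n f x) :
    ContDiff 𝕜 n f :=
  contMDiff_iff_contDiff.1 (contMDiff_of_tsupport fun x hx ↦ (hf x hx).contMDiffAt)

section Carleman

variable {w g : ℂ → ℂ} {a : ℂ} {R ρ M N K : ℝ}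

lemma contDiff_mul_of_analyticAt (hw : ContDiff ℝ 1 w)
    (hg : ∀ z ∈ tsupport w, AnalyticAt ℂ g z) : ContDiff ℝ 1 (w * g) :=
  contDiff_of_contDiffAt_tsupport fun z hz ↦ hw.contDiffAt.mul
    ((hg z (tsupport_mul_subset_left hz)).contDiffAt.restrict_scalars ℝ)

lemma dbar_mul_of_analyticAt (hw : ContDiff ℝ 1 w)
    (hg : ∀ z ∈ tsupport w, AnalyticAt ℂ g z) (z : ℂ) : dbar (w * g) z = dbar w z * g z := by
  by_cases hz : z ∈ tsupport w
  · have hgz := (hg z hz).differentiableAt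
    rw [dbar_mul (hw.differentiable one_ne_zero z) (hgz.restrictScalars ℝ),
      dbar_eq_zero_of_differentiableAt hgz, mul_zero, add_zero]
  · have hz' : z ∉ tsupport (w * g) := fun h ↦ hz (tsupport_mul_subset_left h)
    rw [dbar_eq_zero_of_notMem_tsupport hz, dbar_eq_zero_of_notMem_tsupport hz', zero_mul]

lemma hasCompactSupport_of_tsupport_subset_ball (hwR : tsupport w ⊆ ball a R) :
    HasCompactSupport w :=
  (isCompact_closedBall a R).of_isClosed_subset (isClosed_tsupport w)
    (hwR.trans ball_subset_closedBall)

lemma norm_mul_le_of_norm_dbar_mul_le (hw : ContDiff ℝ 1 w) (hR : 0 ≤ R)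
    (hwR : tsupport w ⊆ ball a R) (hg : ∀ z ∈ tsupport w, AnalyticAt ℂ g z) (hM : 0 ≤ M)
    (hRM : 8 * R * M ≤ 1) (hbound : ∀ z, ‖dbar w z * g z‖ ≤ M * ‖w z * g z‖ + N) (z : ℂ) :
    ‖w z * g z‖ ≤ 8 * R * N := by
  have hC1 := contDiff_mul_of_analyticAt hw hg
  obtain ⟨z₀, hz₀⟩ := hC1.continuous.norm.exists_forall_ge_of_hasCompactSupport
    (hasCompactSupport_of_tsupport_subset_ball hwR).mul_right.norm
  have hsup : ‖(w * g) z₀‖ ≤ 4 * R * (M * ‖(w * g) z₀‖ + N) := by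
    refine norm_le_of_norm_dbar_le hC1 hR (tsupport_mul_subset_left.trans hwR) (fun ζ ↦ ?_) z₀
    rw [dbar_mul_of_analyticAt hw hg]
    exact (hbound ζ).trans (by gcongr; exact hz₀ ζ)
  have habsorb : 8 * R * M * ‖(w * g) z₀‖ ≤ 1 * ‖(w * g) z₀‖ := by gcongr
  calc ‖w z * g z‖ ≤ ‖(w * g) z₀‖ := hz₀ z
    _ ≤ 8 * R * N := by linarith

lemma norm_le_mul_div_pow_of_norm_dbar_le (hw : ContDiff ℝ 1 w) (hR : 0 ≤ R)
    (hwR : tsupport w ⊆ ball a R) (ha : w =ᶠ[𝓝 a] 0) (hρ : 0 < ρ) (hM : 0 ≤ M)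
    (hRM : 8 * R * M ≤ 1) (hwM : ∀ z ∈ ball a ρ, ‖dbar w z‖ ≤ M * ‖w z‖)
    (hwK : ∀ z, ‖dbar w z‖ ≤ K) (n : ℕ) (z : ℂ) :
    ‖w z‖ ≤ 8 * R * K * (‖z - a‖ / ρ) ^ n := by
  have hK : 0 ≤ K := (norm_nonneg _).trans (hwK 0)
  rcases eq_or_ne z a with rfl | hza
  · rw [ha.eq_of_nhds, Pi.zero_apply, norm_zero]
    positivity
  have hweight : ∀ ζ ∈ tsupport w, AnalyticAt ℂ (fun ζ ↦ (ζ - a)⁻¹ ^ n) ζ := by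
    intro ζ hζ
    have hζa : ζ ≠ a := by
      rintro rfl
      exact notMem_tsupport_iff_eventuallyEq.2 ha hζ
    exact ((analyticAt_id.sub analyticAt_const).inv (sub_ne_zero.2 hζa)).pow n
  have hbound (ζ : ℂ) :
      ‖dbar w ζ * (ζ - a)⁻¹ ^ n‖ ≤ M * ‖w ζ * (ζ - a)⁻¹ ^ n‖ + K * ρ⁻¹ ^ n := by
    simp only [norm_mul, norm_pow, norm_inv, ← mul_assoc]
    by_cases hζ : ζ ∈ ball a ρ
    · exact le_add_of_le_of_nonneg (by gcongr; exact hwM ζ hζ) (by positivity)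
    · rw [mem_ball, dist_eq_norm, not_lt] at hζ
      exact le_add_of_nonneg_of_le (by positivity) (by gcongr; exact hwK ζ)
  have h := norm_mul_le_of_norm_dbar_mul_le hw hR hwR hweight hM hRM hbound z
  have hpos : 0 < ‖z - a‖ := norm_pos_iff.2 (sub_ne_zero.2 hza)
  rw [norm_mul, norm_pow, norm_inv, inv_pow, ← div_eq_mul_inv, div_le_iff₀ (by positivity)] at h
  exact h.trans_eq (by rw [div_pow, inv_pow]; ring)

lemma eqOn_zero_ball_of_tsupport_subset (hw : ContDiff ℝ 1 w) (hR : 0 ≤ R)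
    (hwR : tsupport w ⊆ ball a R) (ha : w =ᶠ[𝓝 a] 0) (hM : 0 ≤ M)
    (hRM : 8 * R * M ≤ 1) (hwM : ∀ z ∈ ball a ρ, ‖dbar w z‖ ≤ M * ‖w z‖) :
    EqOn w 0 (ball a ρ) := by
  intro z hz
  have hρ : 0 < ρ := pos_of_mem_ball hz
  obtain ⟨K, hK⟩ := (continuous_dbar hw).bounded_above_of_compact_support
    ((hasCompactSupport_of_tsupport_subset_ball hwR).mono' fun ζ hζ ↦
      not_not.1 fun h ↦ hζ (dbar_eq_zero_of_notMem_tsupport h))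
  have hratio : ‖z - a‖ / ρ < 1 := by
    rwa [div_lt_one hρ, ← dist_eq_norm]
  have hlim := (tendsto_pow_atTop_nhds_zero_of_lt_one (by positivity) hratio).const_mul (8 * R * K)
  rw [mul_zero] at hlim
  exact norm_le_zero_iff.1 (ge_of_tendsto' hlim fun n ↦
    norm_le_mul_div_pow_of_norm_dbar_le hw hR hwR ha hρ hM hRM hwM hK n z)

end Carleman

lemma exists_contDiff_eqOn_ball_tsupport_subset {E F : Type*} [NormedAddCommGroup E]
    [NormedSpace ℝ E] [HasContDiffBump E] [NormedAddCommGroup F] [NormedSpace ℝ F]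
    {n : ℕ∞} {v : E → F} {a : E} {ρ R : ℝ} (hρ : 0 < ρ) (hρR : ρ < R)
    (hv : ContDiffOn ℝ n v (ball a R)) :
    ∃ w : E → F, ContDiff ℝ n w ∧ EqOn w v (ball a ρ) ∧ tsupport w ⊆ ball a R := by
  obtain ⟨ρ', hρρ', hρ'R⟩ := exists_between hρR
  let χ : ContDiffBump a := ⟨ρ, ρ', hρ, hρρ'⟩
  have hsupp : tsupport (fun z ↦ χ z • v z) ⊆ ball a R :=
    (tsupport_smul_subset_left χ v).trans (χ.tsupport_eq ▸ closedBall_subset_ball hρ'R)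
  refine ⟨fun z ↦ χ z • v z, contDiff_of_contDiffAt_tsupport fun z hz ↦ ?_, fun z hz ↦ ?_, hsupp⟩
  · exact χ.contDiffAt.smul (hv.contDiffAt (isOpen_ball.mem_nhds (hsupp hz)))
  · simp only [χ.one_of_mem_closedBall (ball_subset_closedBall hz), one_smul]

section UniqueContinuation

variable {v : ℂ → ℂ}

lemma eqOn_zero_ball_of_norm_dbar_le {a : ℂ} {R M : ℝ} (hv : ContDiffOn ℝ 1 v (ball a R))
    (ha : v =ᶠ[𝓝 a] 0) (hM : 0 ≤ M) (hRM : 8 * R * M ≤ 1)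
    (hvM : ∀ z ∈ ball a R, ‖dbar v z‖ ≤ M * ‖v z‖) : EqOn v 0 (ball a R) := by
  intro z hz
  have hR : 0 < R := pos_of_mem_ball hz
  obtain ⟨ρ, hzρ, hρR⟩ := exists_between (max_lt (mem_ball.1 hz) hR)
  obtain ⟨hzρ, hρ⟩ := max_lt_iff.1 hzρ
  obtain ⟨w, hw, hwv, hwR⟩ := exists_contDiff_eqOn_ball_tsupport_subset (n := 1) hρ hρR hv
  have hwv' {ζ : ℂ} (hζ : ζ ∈ ball a ρ) : w =ᶠ[𝓝 ζ] v :=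
    hwv.eventuallyEq_of_mem (isOpen_ball.mem_nhds hζ)
  rw [← hwv hzρ]
  refine eqOn_zero_ball_of_tsupport_subset hw hR.le hwR
    ((hwv' (mem_ball_self hρ)).trans ha) hM hRM (fun ζ hζ ↦ ?_) hzρ
  rw [dbar_congr_of_eventuallyEq (hwv' hζ), hwv hζ]
  exact hvM ζ (ball_subset_ball hρR.le hζ)

lemma eventuallyEq_zero_of_frequently_eventuallyEq_zero {b : ℂ} (hv : ContDiffAt ℝ 1 v b)
    (hdbar : dbar v =O[𝓝 b] v) (hvan : ∃ᶠ a in 𝓝 b, v =ᶠ[𝓝 a] 0) : v =ᶠ[𝓝 b] 0 := by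
  obtain ⟨M, hM, hvM⟩ := hdbar.exists_pos
  obtain ⟨r, hr, hgood⟩ := Metric.eventually_nhds_iff_ball.1
    ((hv.eventually (by simp)).and hvM.bound)
  set R := min (r / 2) (1 / (8 * M))
  have hR : 0 < R := by positivity
  have hRr : R ≤ r / 2 := min_le_left _ _
  have hRM : 8 * R * M ≤ 1 := by
    have : R ≤ 1 / (8 * M) := min_le_right _ _
    rw [le_div_iff₀ (by positivity)] at this
    linarith
  obtain ⟨a, ha, hab⟩ := (hvan.and_eventually (ball_mem_nhds b hR)).exists
  have hsub : ball a R ⊆ ball b r := ball_subset_ball' (by linarith [mem_ball.1 hab])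
  refine (eqOn_zero_ball_of_norm_dbar_le
    (fun z hz ↦ (hgood z (hsub hz)).1.contDiffWithinAt) ha hM.le hRM
    fun z hz ↦ (hgood z (hsub hz)).2).eventuallyEq_of_mem (isOpen_ball.mem_nhds ?_)
  exact mem_ball_comm.1 hab

theorem unique_continuation_of_CR_type_equation_general {Ω : Set ℂ} (hΩ : IsOpen Ω)
    (hconn : IsPreconnected Ω) (hv : ContDiffOn ℝ 1 v Ω)
    (hdbar : ∀ z ∈ Ω, dbar v =O[𝓝 z] v) (hvan : ∃ a ∈ Ω, v =ᶠ[𝓝 a] 0) : EqOn v 0 Ω := by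
  have hsub : Ω ⊆ {z | v =ᶠ[𝓝 z] 0} := by
    refine hconn.subset_of_closure_inter_subset isOpen_setOfPred_eventually_nhds hvan ?_
    rintro b ⟨hb, hbΩ⟩
    exact eventuallyEq_zero_of_frequently_eventuallyEq_zero (hv.contDiffAt (hΩ.mem_nhds hbΩ))
      (hdbar b hbΩ) (mem_closure_iff_frequently.1 hb)
  exact fun z hz ↦ (hsub hz).eq_of_nhds

lemma dbar_isBigO_self_of_CR_type_equation {C₁ C₂ : ℂ → ℂ} {l : Filter ℂ}
    (hC₁ : C₁ =O[l] (1 : ℂ → ℂ)) (hC₂ : C₂ =O[l] (1 : ℂ → ℂ))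
    (heq : ∀ᶠ z in l, dbar v z + C₁ z * v z + C₂ z * conj (v z) = 0) : dbar v =O[l] v := by
  have hconj : (fun z ↦ conj (v z)) =O[l] v := isBigO_of_le l fun z ↦ by simp
  have hsum : (fun z ↦ -(C₁ z * v z + C₂ z * conj (v z))) =O[l] v := by
    simpa using ((hC₁.mul (isBigO_refl v l)).add (by simpa using hC₂.mul hconj)).neg_left
  refine hsum.congr' (heq.mono fun z hz ↦ ?_) .rfl
  linear_combination -hz

end UniqueContinuation

/-- unique continuation for Cauchy–Riemann type equations: a solution
vanishing identically on a nonempty open subset of a connected open set vanishes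
identically. -/
theorem unique_continuation_of_CR_type_equation
    (Ω : Set ℂ) (hΩ : IsOpen Ω) (hconn : IsConnected Ω)
    (C₁ C₂ : ℂ → ℂ)
    (hC₁ : ContinuousOn C₁ Ω) (hC₂ : ContinuousOn C₂ Ω)
    (v : ℂ → ℂ) (hv : ContDiffOn ℝ 1 v Ω)
    (heq : ∀ z ∈ Ω, dbar v z + C₁ z * v z + C₂ z * (starRingEnd ℂ) (v z) = 0)
    (hvan : ∃ V : Set ℂ, IsOpen V ∧ V.Nonempty ∧ V ⊆ Ω ∧ ∀ z ∈ V, v z = 0) :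
    ∀ z ∈ Ω, v z = 0 := by
  obtain ⟨V, hV, ⟨a, haV⟩, hVΩ, hvV⟩ := hvan
  refine unique_continuation_of_CR_type_equation_general hΩ hconn.isPreconnected hv
    (fun z hz ↦ ?_) ⟨a, hVΩ haV, eventually_of_mem (hV.mem_nhds haV) hvV⟩
  have hΩz : Ω ∈ 𝓝 z := hΩ.mem_nhds hz
  exact dbar_isBigO_self_of_CR_type_equation ((hC₁.continuousAt hΩz).isBigO_one ℂ)
    ((hC₂.continuousAt hΩz).isBigO_one ℂ) (eventually_of_mem hΩz heq)
end
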